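/- For A and B subsets of S = ∏_{i=1}^n S_i with each S_i finite, and P = ∏ P_i a product probability measure on S, the probability of the set A □ B (consisting of all x ∈ S for which there exist disjoint subsets K, L of {1,...,n} with [x]_K ⊆ A and [x]_L ⊆ B) satisfies P(A □ B) ≤ P(A)P(B). -/

import Mathlib

open MeasureTheory

/-- `cylinder x K` is the set of points agreeing with `x` on the coordinates in `K`. -/
def cylinder {n : ℕ} {S : Fin n → Type*} (x : ∀ i, S i) (K : Finset (Fin n)) :
    Set (∀ i, S i) :=
  {y | ∀ i ∈ K, y i = x i}

/-- The van den Berg–Kesten box operation. -/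
def boxOp {n : ℕ} {S : Fin n → Type*} (A B : Set (∀ i, S i)) : Set (∀ i, S i) :=
  {x | ∃ K L : Finset (Fin n), Disjoint K L ∧ cylinder x K ⊆ A ∧ cylinder x L ⊆ B}

/-!
On the discrete cube write `-B` for the set of antipodes of points of `B`; the claim there is
`|A □ B| ≤ |A ∩ -B|`. Attach to each `x ∈ A □ B`, with witnesses `K` and `Kᶜ`, a tensor product
`u x` of vectors in `ℤ ^ Bool` that is supported on `[x]_K ⊆ A`. These are independent because
modulo 2 they are the standard basis. A positive definite tensor power `T` of a `2 × 2` matrix maps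
`u x` to a vector supported on the antipode of `[x]_Kᶜ ⊆ B`, that is, inside `-B`. Hence a
combination `w` of the `u x` that vanishes on `A ∩ -B` satisfies `⟪w, T w⟫ = 0`, so `w = 0`: already
the restrictions of the `u x` to `A ∩ -B` are independent.

For a general product, draw two independent points for every coordinate. For each such draw, the
cube inequality compares the choices `σ` of one point per coordinate that land in `A □ B` with those
for which the chosen points lie in `A` and the rejected ones in `B`. Averaging over the draw gives
`P (A □ B) ≤ P A * P B`, since for each fixed `σ` the chosen and rejected points are independent
with law `P`.
-/

open Matrix Finset
open scoped ComplexOrder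

section PiTensor

variable {ι : Type*} [Fintype ι] {α β γ : ι → Type*}

/-- The pure tensor `⨂ i, v i` of finitely many vectors, in coordinates. -/
def piTensor {R : Type*} [CommMonoid R] (v : ∀ i, α i → R) (a : ∀ i, α i) : R :=
  ∏ i, v i (a i)

/-- The Kronecker product `⨂ i, M i` of a finite family of matrices. -/
def piKronecker {R : Type*} [CommMonoid R] (M : ∀ i, Matrix (α i) (β i) R) :
    Matrix (∀ i, α i) (∀ i, β i) R :=
  of fun a b ↦ ∏ i, M i (a i) (b i)

theorem apply_ne_zero_of_piTensor_ne_zero {R : Type*} [CommMonoidWithZero R]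
    {v : ∀ i, α i → R} {a : ∀ i, α i} (h : piTensor v a ≠ 0) (i : ι) : v i (a i) ≠ 0 :=
  fun hi ↦ h (prod_eq_zero (mem_univ i) hi)

theorem piTensor_single_one {R : Type*} [CommMonoidWithZero R]
    [∀ i, DecidableEq (α i)] (x : ∀ i, α i) :
    piTensor (fun i ↦ (Pi.single (x i) 1 : α i → R)) = Pi.single (M := fun _ ↦ R) x 1 := by
  ext a
  simp only [piTensor, Pi.single_apply, prod_ite_zero, prod_const_one, mem_univ, true_imp_iff,
    funext_iff]

theorem map_piTensor {R S : Type*} [CommMonoid R] [CommMonoid S] {F : Type*} [FunLike F R S]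
    [MonoidHomClass F R S] (f : F) (v : ∀ i, α i → R) :
    f ∘ piTensor v = piTensor fun i ↦ f ∘ v i :=
  funext fun _ ↦ map_prod f _ _

theorem piKronecker_one {R : Type*} [CommMonoidWithZero R]
    [∀ i, DecidableEq (α i)] :
    piKronecker (fun i ↦ (1 : Matrix (α i) (α i) R)) = 1 := by
  ext a b
  simp only [piKronecker, of_apply, one_apply, prod_ite_zero, prod_const_one, mem_univ,
    true_imp_iff, funext_iff]

theorem conjTranspose_piKronecker {R : Type*} [CommSemiring R] [StarRing R]
    (M : ∀ i, Matrix (α i) (β i) R) :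
    (piKronecker M)ᴴ = piKronecker fun i ↦ (M i)ᴴ := by
  ext a b
  exact map_prod (starRingEnd R) _ _

variable [DecidableEq ι] [∀ i, Fintype (β i)]

theorem piKronecker_mulVec_piTensor {R : Type*} [CommSemiring R]
    (M : ∀ i, Matrix (α i) (β i) R) (v : ∀ i, β i → R) :
    piKronecker M *ᵥ piTensor v = piTensor fun i ↦ M i *ᵥ v i := by
  ext a
  simp only [mulVec, dotProduct, piKronecker, piTensor, of_apply, ← prod_mul_distrib,
    prod_univ_sum, Fintype.piFinset_univ]

theorem piKronecker_mul {R : Type*} [CommSemiring R]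
    (M : ∀ i, Matrix (α i) (β i) R) (N : ∀ i, Matrix (β i) (γ i) R) :
    piKronecker M * piKronecker N = piKronecker fun i ↦ M i * N i := by
  ext a c
  simp only [mul_apply, piKronecker, of_apply, ← prod_mul_distrib, prod_univ_sum,
    Fintype.piFinset_univ]

end PiTensor

section PosDef

variable {ι : Type*} [Fintype ι] {α : ι → Type*} [∀ i, Finite (α i)] {𝕜 : Type*} [RCLike 𝕜]
  {M : ∀ i, Matrix (α i) (α i) 𝕜}

open scoped MatrixOrder in
theorem posSemidef_piKronecker (hM : ∀ i, (M i).PosSemidef) : (piKronecker M).PosSemidef := by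
  classical
  have := fun i ↦ Fintype.ofFinite (α i)
  choose B hB using fun i ↦ CStarAlgebra.nonneg_iff_eq_star_mul_self.mp (hM i).nonneg
  obtain rfl : M = fun i ↦ (B i)ᴴ * B i := funext hB
  rw [← piKronecker_mul, ← conjTranspose_piKronecker]
  exact posSemidef_conjTranspose_mul_self _

theorem posDef_piKronecker (hM : ∀ i, (M i).PosDef) : (piKronecker M).PosDef := by
  classical
  have := fun i ↦ Fintype.ofFinite (α i)
  refine (posSemidef_piKronecker fun i ↦ (hM i).posSemidef).posDef_iff_isUnit.mpr ?_
  choose N hN using fun i ↦ (hM i).isUnit.exists_right_inv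
  refine IsUnit.of_mul_eq_one (piKronecker N) ?_
  rw [piKronecker_mul, funext hN, piKronecker_one]

end PosDef

section LinearAlgebra

theorem exists_apply_ne_zero_of_mem_span {R M N : Type*} [Semiring R] [AddCommMonoid M]
    [AddCommMonoid N] [Module R M] [Module R N] (f : M →ₗ[R] N) {s : Set M} {w : M}
    (hw : w ∈ Submodule.span R s) (hfw : f w ≠ 0) : ∃ v ∈ s, f v ≠ 0 := by
  by_contra! h
  exact hfw (Submodule.span_le (p := LinearMap.ker f).mpr h hw)

variable {ι κ 𝕜 : Type*} [Fintype ι] [RCLike 𝕜]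

theorem natCard_le_ncard_of_posDef {T : Matrix ι ι 𝕜} (hT : T.PosDef) {u : κ → ι → 𝕜}
    (hu : LinearIndependent 𝕜 u) {C : Set ι}
    (hC : ∀ x y a, u x a ≠ 0 → (T *ᵥ u y) a ≠ 0 → a ∈ C) : Nat.card κ ≤ C.ncard := by
  classical
  have := Fintype.ofFinite C
  have := hu.finite
  have := Fintype.ofFinite κ
  suffices h : LinearIndependent 𝕜 fun x ↦ LinearMap.funLeft 𝕜 𝕜 ((↑) : C → ι) (u x) by
    rw [Nat.card_eq_fintype_card, ← Nat.card_coe_set_eq, Nat.card_eq_fintype_card,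
      ← Module.finrank_fintype_fun_eq_card 𝕜 (η := C)]
    exact h.fintype_card_le_finrank
  refine hu.map (Submodule.disjoint_def.mpr fun w hw hwC ↦ ?_)
  have hwC' : ∀ a ∈ C, w a = 0 := fun a ha ↦ congrFun hwC ⟨a, ha⟩
  have hwT : ∀ a, star (w a) * (T *ᵥ w) a = 0 := by
    by_contra! ⟨a, ha⟩
    have hwa : w a ≠ 0 := star_ne_zero.mp (left_ne_zero_of_mul ha)
    let coord : (ι → 𝕜) →ₗ[𝕜] 𝕜 := LinearMap.proj a
    obtain ⟨_, ⟨x, rfl⟩, hx⟩ := exists_apply_ne_zero_of_mem_span coord hw hwa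
    obtain ⟨_, ⟨y, rfl⟩, hy⟩ :=
      exists_apply_ne_zero_of_mem_span (coord ∘ₗ T.mulVecLin) hw (right_ne_zero_of_mul ha)
    exact hwa (hwC' a (hC x y a hx hy))
  by_contra hw0
  exact (hT.dotProduct_mulVec_pos hw0).ne' (sum_eq_zero fun a _ ↦ hwT a)

end LinearAlgebra

section Butterfly

variable {ι : Type*} [Fintype ι] [DecidableEq ι]

/-- The vector attached to the butterfly with body `x` and index set `K`: the tensor product of
`e (x i)` for `i ∈ K` and of `e (x i) + 2 e (!x i)` for `i ∉ K`. It is supported on the red wing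
`[x]_K`, and `reimerKernel ^ ⊗ ι` maps it to a vector supported on the antipode of the yellow wing
`[x]_Kᶜ`. -/
def butterflyVector (R : Type*) [CommSemiring R] (x : ι → Bool) (K : Finset ι) :
    (ι → Bool) → R :=
  piTensor fun i ↦ Pi.single (x i) 1 + if i ∈ K then 0 else Pi.single (!x i) 2

theorem eq_of_butterflyVector_ne_zero {R : Type*} [CommSemiring R] {x a : ι → Bool}
    {K : Finset ι} (h : butterflyVector R x K a ≠ 0) : ∀ i ∈ K, a i = x i := by
  intro i hi
  have hfactor := apply_ne_zero_of_piTensor_ne_zero h i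
  contrapose! hfactor
  simp [hi, hfactor]

theorem map_butterflyVector {R S : Type*} [CommSemiring R] [CommSemiring S] (f : R →+* S)
    (x : ι → Bool) (K : Finset ι) :
    f ∘ butterflyVector R x K = butterflyVector S x K := by
  rw [butterflyVector, map_piTensor, butterflyVector]
  congr! 2 with i
  ext b
  by_cases hi : i ∈ K <;> simp [hi, Pi.single_apply, apply_ite f, map_ofNat]

theorem butterflyVector_eq_single {R : Type*} [CommRing R] [CharP R 2]
    (x : ι → Bool) (K : Finset ι) : butterflyVector R x K = Pi.single x 1 := by
  simp [butterflyVector, CharTwo.two_eq_zero, piTensor_single_one]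

/-- The square matrix with rows `butterflyVector R x (K x)`, one for each body `x`. -/
def butterflyMatrix (R : Type*) [CommSemiring R] (K : (ι → Bool) → Finset ι) :
    Matrix (ι → Bool) (ι → Bool) R :=
  of fun x ↦ butterflyVector R x (K x)

theorem map_butterflyMatrix {R S : Type*} [CommSemiring R] [CommSemiring S] (f : R →+* S)
    (K : (ι → Bool) → Finset ι) :
    (butterflyMatrix R K).map f = butterflyMatrix S K :=
  ext fun x ↦ congrFun (map_butterflyVector f x (K x))

theorem butterflyMatrix_eq_one {R : Type*} [CommRing R] [CharP R 2]
    (K : (ι → Bool) → Finset ι) : butterflyMatrix R K = 1 := by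
  ext x a
  simp [butterflyMatrix, butterflyVector_eq_single, Pi.single_apply, one_apply, eq_comm]

theorem det_butterflyMatrix_ne_zero {R : Type*} [CommRing R] [CharZero R]
    (K : (ι → Bool) → Finset ι) : (butterflyMatrix R K).det ≠ 0 := by
  have odd_det : Int.castRingHom (ZMod 2) (butterflyMatrix ℤ K).det = 1 := by
    rw [RingHom.map_det, RingHom.mapMatrix_apply, map_butterflyMatrix, butterflyMatrix_eq_one,
      det_one]
  rw [← map_butterflyMatrix (Int.castRingHom R), ← RingHom.mapMatrix_apply, ← RingHom.map_det,
    eq_intCast, Int.cast_ne_zero]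
  intro det_eq_zero
  simp [det_eq_zero] at odd_det

theorem linearIndependent_butterflyVector {R : Type*} [CommRing R] [IsDomain R] [CharZero R]
    (K : (ι → Bool) → Finset ι) :
    LinearIndependent R fun x ↦ butterflyVector R x (K x) :=
  linearIndependent_rows_of_det_ne_zero (det_butterflyMatrix_ne_zero K)

/-- The matrix `[[2, -1], [-1, 2]]`. It is chosen to be positive definite and to map the factor
`e b + 2 e (!b)` of a butterfly vector to a multiple of `e (!b)`. -/
def reimerKernel : Matrix Bool Bool ℝ :=
  of fun a b ↦ if a = b then 2 else -1

theorem posDef_reimerKernel : reimerKernel.PosDef := by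
  let sign : Bool → ℝ := fun b ↦ bif b then 1 else -1
  have reimerKernel_eq : reimerKernel = 1 + vecMulVec sign (star sign) := by
    ext a b
    cases a <;> cases b <;> norm_num [reimerKernel, sign, vecMulVec_apply, one_apply]
  rw [reimerKernel_eq]
  exact PosDef.one.add_posSemidef (posSemidef_vecMulVec_self_star sign)

theorem reimerKernel_mulVec (b : Bool) :
    reimerKernel *ᵥ (Pi.single b 1 + Pi.single (!b) 2) = Pi.single (!b) 3 := by
  ext c
  cases b <;> cases c <;>
    norm_num [reimerKernel, mulVec, dotProduct]

theorem eq_not_of_piKronecker_mulVec_ne_zero {x a : ι → Bool} {K : Finset ι}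
    (h : (piKronecker (fun _ ↦ reimerKernel) *ᵥ butterflyVector ℝ x K) a ≠ 0) :
    ∀ i ∉ K, a i = !x i := by
  intro i hi
  rw [butterflyVector, piKronecker_mulVec_piTensor] at h
  have hfactor := apply_ne_zero_of_piTensor_ne_zero h i
  contrapose! hfactor
  simp [hi, reimerKernel_mulVec, hfactor]

/-- Reimer's butterfly theorem. -/
theorem ncard_le_ncard_biUnion_cylinder_inter {n : ℕ} (X : Set (Fin n → Bool))
    (K : (Fin n → Bool) → Finset (Fin n)) :
    X.ncard ≤ ((⋃ x ∈ X, cylinder x (K x)) ∩ ⋃ x ∈ X, cylinder xᶜ (K x)ᶜ).ncard := by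
  rw [← Nat.card_coe_set_eq]
  refine natCard_le_ncard_of_posDef (posDef_piKronecker fun _ ↦ posDef_reimerKernel)
    ((linearIndependent_butterflyVector (R := ℝ) K).comp ((↑) : X → _) Subtype.val_injective)
    fun x y a hx hy ↦ ⟨?_, ?_⟩
  · exact Set.mem_biUnion x.2 (eq_of_butterflyVector_ne_zero hx)
  · exact Set.mem_biUnion y.2 fun i hi ↦
      eq_not_of_piKronecker_mulVec_ne_zero hy i (Finset.mem_compl.mp hi)

end Butterfly

section BoxOp

variable {n : ℕ} {S : Fin n → Type*}

theorem cylinder_anti (x : ∀ i, S i) : Antitone (cylinder x) :=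
  fun _ _ hKL _ hy i hi ↦ hy i (hKL hi)

theorem mem_boxOp_iff_exists_compl {A B : Set (∀ i, S i)} {x : ∀ i, S i} :
    x ∈ boxOp A B ↔ ∃ K, cylinder x K ⊆ A ∧ cylinder x Kᶜ ⊆ B := by
  constructor
  · rintro ⟨K, L, hKL, hA, hB⟩
    exact ⟨K, hA, (cylinder_anti x (le_compl_iff_disjoint_left.mpr hKL)).trans hB⟩
  · rintro ⟨K, hA, hB⟩
    exact ⟨K, Kᶜ, disjoint_compl_right, hA, hB⟩

theorem preimage_piMap_boxOp_subset {T : Fin n → Type*} (f : ∀ i, T i → S i)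
    (A B : Set (∀ i, S i)) :
    Pi.map f ⁻¹' boxOp A B ⊆ boxOp (Pi.map f ⁻¹' A) (Pi.map f ⁻¹' B) := by
  rintro x ⟨K, L, hKL, hA, hB⟩
  have preimage_cylinder {K C} (h : cylinder (Pi.map f x) K ⊆ C) :
      cylinder x K ⊆ Pi.map f ⁻¹' C :=
    fun y hy ↦ h fun i hi ↦ congrArg (f i) (hy i hi)
  exact ⟨K, L, hKL, preimage_cylinder hA, preimage_cylinder hB⟩

/-- Reimer's inequality on the discrete cube. -/
theorem ncard_boxOp_le (A B : Set (Fin n → Bool)) :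
    (boxOp A B).ncard ≤ (A ∩ compl ⁻¹' B).ncard := by
  choose! K hKA hKB using fun x (hx : x ∈ boxOp A B) ↦ mem_boxOp_iff_exists_compl.mp hx
  refine (ncard_le_ncard_biUnion_cylinder_inter (boxOp A B) K).trans
    (Set.ncard_le_ncard (Set.inter_subset_inter (Set.iUnion₂_subset hKA)
      (Set.iUnion₂_subset fun x hx z hz ↦ hKB x hx fun i hi ↦ ?_)))
  exact compl_eq_comm.mp (hz i hi).symm

theorem ncard_setOf_piMap_mem_boxOp_le (p : ∀ i, Bool → S i) (A B : Set (∀ i, S i)) :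
    {σ | Pi.map p σ ∈ boxOp A B}.ncard ≤ {σ | Pi.map p σ ∈ A ∧ Pi.map p σᶜ ∈ B}.ncard :=
  (Set.ncard_le_ncard (preimage_piMap_boxOp_subset p A B)).trans (ncard_boxOp_le _ _)

end BoxOp

section Measure

variable {ι Ω Ω' : Type*} [Finite ι] [MeasurableSpace Ω] [MeasurableSpace Ω'] {μ : Measure Ω}
  {ν : Measure Ω'} {T : ι → Ω → Ω'}

theorem lintegral_ncard_setOf_mem (hT : ∀ i, MeasurePreserving (T i) μ ν) {E : Set Ω'}
    (hE : NullMeasurableSet E ν) :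
    ∫⁻ ω, {i | T i ω ∈ E}.ncard ∂μ = Nat.card ι * ν E := by
  classical
  have := Fintype.ofFinite ι
  have hTE (i : ι) : NullMeasurableSet (T i ⁻¹' E) μ := hE.preimage (hT i).quasiMeasurePreserving
  calc ∫⁻ ω, {i | T i ω ∈ E}.ncard ∂μ
      = ∫⁻ ω, ∑ i, (T i ⁻¹' E).indicator 1 ω ∂μ := by
        simp [Set.indicator_apply, sum_boole, Set.ncard_eq_toFinset_card']
    _ = ∑ i, ∫⁻ ω, (T i ⁻¹' E).indicator 1 ω ∂μ :=
        lintegral_finsetSum' _ fun i _ ↦ aemeasurable_one.indicator₀ (hTE i)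
    _ = Nat.card ι * ν E := by
        simp [lintegral_indicator_one₀, hTE, (hT _).measure_preimage hE]

theorem measure_le_of_forall_ncard_setOf_mem_le [Nonempty ι]
    (hT : ∀ i, MeasurePreserving (T i) μ ν) {E F : Set Ω'} (hE : NullMeasurableSet E ν)
    (h : ∀ ω, {i | T i ω ∈ E}.ncard ≤ {i | T i ω ∈ F}.ncard) : ν E ≤ ν F := by
  have h_card : Nat.card ι * ν E ≤ Nat.card ι * ν F := by
    rw [← measure_toMeasurable F, ← lintegral_ncard_setOf_mem hT hE,
      ← lintegral_ncard_setOf_mem hT (measurableSet_toMeasurable ν F).nullMeasurableSet]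
    refine lintegral_mono fun ω ↦ Nat.cast_le.mpr ((h ω).trans (Set.ncard_le_ncard fun i hi ↦ ?_))
    exact subset_toMeasurable ν F hi
  exact (ENNReal.mul_le_mul_iff_right (by simp [Nat.card_ne_zero, *]) (by simp)).mp h_card

end Measure

section SelectPair

variable {ι : Type*} {S : ι → Type*}

theorem preimage_piMap_prodMk_compl_univ_pi (σ : ι → Bool) (s t : ∀ i, Set (S i)) :
    (fun p : ∀ i, Bool → S i ↦ (Pi.map p σ, Pi.map p σᶜ)) ⁻¹' (Set.univ.pi s ×ˢ Set.univ.pi t) =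
      Set.univ.pi fun i ↦ Set.univ.pi fun b ↦ if b = σ i then s i else t i := by
  ext p
  simp only [Set.mem_preimage, Set.mem_prod, Set.mem_univ_pi, ← forall_and]
  refine forall_congr' fun i ↦ ?_
  cases h : σ i <;> simp [h, and_comm]

theorem measurePreserving_piMap_prodMk_compl [Fintype ι] [∀ i, MeasurableSpace (S i)]
    (P : ∀ i, Measure (S i)) [∀ i, SigmaFinite (P i)] (σ : ι → Bool) :
    MeasurePreserving (fun p : ∀ i, Bool → S i ↦ (Pi.map p σ, Pi.map p σᶜ))
      (Measure.pi fun i ↦ Measure.pi fun _ ↦ P i) ((Measure.pi P).prod (Measure.pi P)) := by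
  have measurable_select :
      Measurable fun p : ∀ i, Bool → S i ↦ (Pi.map p σ, Pi.map p σᶜ) := by
    unfold Pi.map
    fun_prop
  let spanning := Measure.FiniteSpanningSetsIn.pi fun i ↦ (P i).toFiniteSpanningSetsIn
  refine ⟨measurable_select, (Measure.prod_eq_generateFrom generateFrom_pi generateFrom_pi
    isPiSystem_pi isPiSystem_pi spanning spanning ?_).symm⟩
  rintro _ ⟨s, hs, rfl⟩ _ ⟨t, ht, rfl⟩
  have measurableSet_rectangle : MeasurableSet (Set.univ.pi s ×ˢ Set.univ.pi t) :=
    (MeasurableSet.univ_pi fun i ↦ hs i trivial).prod (.univ_pi fun i ↦ ht i trivial)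
  rw [Measure.map_apply measurable_select measurableSet_rectangle,
    preimage_piMap_prodMk_compl_univ_pi, Measure.pi_pi, Measure.pi_pi, Measure.pi_pi,
    ← prod_mul_distrib]
  refine prod_congr rfl fun i _ ↦ ?_
  rw [Measure.pi_pi, Fintype.prod_bool]
  cases σ i <;> simp [mul_comm]

end SelectPair

theorem bkr_inequality_general {n : ℕ} {S : Fin n → Type*} [∀ i, MeasurableSpace (S i)]
    (P : ∀ i, Measure (S i)) [∀ i, IsProbabilityMeasure (P i)] {A B : Set (∀ i, S i)}
    (hAB : NullMeasurableSet (boxOp A B) (Measure.pi P)) :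
    Measure.pi P (boxOp A B) ≤ Measure.pi P A * Measure.pi P B := by
  calc Measure.pi P (boxOp A B)
      = (Measure.pi P).prod (Measure.pi P) (boxOp A B ×ˢ Set.univ) := by simp
    _ ≤ (Measure.pi P).prod (Measure.pi P) (A ×ˢ B) := by
        refine measure_le_of_forall_ncard_setOf_mem_le (measurePreserving_piMap_prodMk_compl P)
          (hAB.prod nullMeasurableSet_univ) fun p ↦ ?_
        simpa using ncard_setOf_piMap_mem_boxOp_le p A B
    _ = Measure.pi P A * Measure.pi P B := Measure.prod_prod A B

/-- The van den Berg–Kesten–Reimer inequality: for a product probability measure on a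
finite product of finite sets, `P(A □ B) ≤ P(A) P(B)`. -/
theorem bkr_inequality {n : ℕ} {S : Fin n → Type*} [∀ i, Fintype (S i)]
    [∀ i, MeasurableSpace (S i)] [∀ i, MeasurableSingletonClass (S i)]
    (P : ∀ i, Measure (S i)) [∀ i, IsProbabilityMeasure (P i)]
    (A B : Set (∀ i, S i)) :
    Measure.pi P (boxOp A B) ≤ Measure.pi P A * Measure.pi P B :=
  bkr_inequality_general P (Set.toFinite _).measurableSet.nullMeasurableSet
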